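/- Let I ⊆ k[x_1,…,x_n] be an ideal, ≺ a term order orienting the graph of the Gröbner fan, and (C_1, C_2) a directed edge with monomial initial ideals M_1, M_2 and shared facet F. Let v be a relative interior point of F and 𝒜_v the associated grading. Let N_1, N_2 be the sets of monomials of M_1 and M_2 respectively, and φ_{≺ M_1 M_2}: N_1 → N_2 the degree-wise ≺-order-preserving bijection. Then for every monomial x^b ∈ N_1 it is not the case that φ_{≺ M_1 M_2}(x^b) ≺ x^b. -/

import Mathlib

/-!
Let `N₁`, `N₂` be the monomials of the two initial ideals `M₁`, `M₂`, and let `F` be the shared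
facet, with normal `q - p` and relative interior point `v`.

A full-dimensional class of weights has a monomial initial ideal, because that ideal is homogeneous
for all weights of the class and these separate monomials. If the class contains a positive weight,
division terminates, so `I` has a vector space basis `f m = m - (normal form of m)` indexed by the
monomials `m` of the initial ideal (`exists_markedBasis`). The initial forms of this basis generate
`in_x(I)` for every `x` in the closed cone (`IsMarkedBasis.initialFormIdeal_eq`). Consequently
`in_x(I)` is constant on the relative interior of `F`, the span of `C_v(I)` contains `F`, and two
monomials have the same degree for the given grading exactly when their difference is a multiple of
`q - p`. Along such a line the term order agrees with the weight `w₂`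
(`TermOrder.lt_of_line`).

Suppose now `φ b ≺ b`. Let `S` be the set of monomials of `N₁` in the degree of `b` that are at
most `b`, and `T` the set of those that are at most `φ b`; then `T` is a proper subset of `S`. As
`φ` is increasing, it sends `S` to monomials of `N₂` of that degree that are at most `φ b`. Every
nonzero combination `g` of the basis elements `f₂ (φ s)`, `s ∈ S`, has its `v`-leading terms on
the line and at most `φ b`, and by `IsMarkedBasis.leading_mem` one of them, namely the
`w₁`-maximal one, lies in `N₁`, hence in `T`. So the coefficients on `T` determine such a
combination, which gives `|S| ≤ |T|`, a contradiction.
-/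

open MvPolynomial

/-- A term order on the monomials of `k[x_1,…,x_n]`, identified with exponent
vectors in `ℕ^n`: a strict total order with `1` smallest and compatible with
multiplication of monomials. -/
structure TermOrder (n : ℕ) : Type where
  lt : (Fin n →₀ ℕ) → (Fin n →₀ ℕ) → Prop
  irrefl : ∀ a, ¬ lt a a
  trans : ∀ a b c, lt a b → lt b c → lt a c
  total : ∀ a b, a ≠ b → lt a b ∨ lt b a
  zero_lt : ∀ a, a ≠ 0 → lt 0 a
  add_right : ∀ a b c, lt a b → lt (a + c) (b + c)

variable {n : ℕ} {k : Type*} [Field k]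

/-- The exponent of the `τ`-largest term of `f` (and `0` if `f = 0`). -/
noncomputable def TermOrder.leadExp (τ : TermOrder n) (f : MvPolynomial (Fin n) k) :
    Fin n →₀ ℕ :=
  letI := Classical.propDecidable (∃ α, α ∈ f.support ∧ ∀ β ∈ f.support, β ≠ α → τ.lt β α)
  if h : ∃ α, α ∈ f.support ∧ ∀ β ∈ f.support, β ≠ α → τ.lt β α then h.choose else 0

/-- The initial term `in_τ(f)` : the `τ`-largest term of `f` (with coefficient). -/
noncomputable def TermOrder.initialTerm (τ : TermOrder n) (f : MvPolynomial (Fin n) k) :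
    MvPolynomial (Fin n) k :=
  monomial (τ.leadExp f) (f.coeff (τ.leadExp f))

/-- The initial ideal `in_τ(I) = ⟨in_τ(f) : f ∈ I \ {0}⟩`. -/
noncomputable def TermOrder.initialIdeal (τ : TermOrder n) (I : Ideal (MvPolynomial (Fin n) k)) :
    Ideal (MvPolynomial (Fin n) k) :=
  Ideal.span {p | ∃ f ∈ I, f ≠ 0 ∧ p = τ.initialTerm f}

/-- The `ω`-degree `⟨ω,α⟩` of a monomial exponent `α`. -/
noncomputable def wdeg (ω : Fin n → ℝ) (α : Fin n →₀ ℕ) : ℝ := ∑ i, ω i * (α i : ℝ)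

/-- The initial form `in_ω(f)`: the sum of the terms of `f` whose exponents
maximize `⟨ω,·⟩`. -/
noncomputable def initialForm (ω : Fin n → ℝ) (f : MvPolynomial (Fin n) k) :
    MvPolynomial (Fin n) k :=
  letI : DecidablePred fun α : Fin n →₀ ℕ => ∀ β ∈ f.support, wdeg ω β ≤ wdeg ω α :=
    Classical.decPred _
  ∑ α ∈ f.support.filter (fun α => ∀ β ∈ f.support, wdeg ω β ≤ wdeg ω α),
    monomial α (f.coeff α)

/-- The initial ideal `in_ω(I) = ⟨in_ω(f) : f ∈ I⟩`. -/
noncomputable def initialFormIdeal (ω : Fin n → ℝ) (I : Ideal (MvPolynomial (Fin n) k)) :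
    Ideal (MvPolynomial (Fin n) k) :=
  Ideal.span {p | ∃ f ∈ I, p = initialForm ω f}

/-- `C_≺(I)`: the closure of `{u : in_u(I) = in_≺(I)}` in `ℝ^n`. -/
noncomputable def Cprec (τ : TermOrder n) (I : Ideal (MvPolynomial (Fin n) k)) :
    Set (Fin n → ℝ) :=
  closure {u : Fin n → ℝ | initialFormIdeal u I = τ.initialIdeal I}

/-- `C_v(I)`: the closure of the equivalence class `{u : in_u(I) = in_v(I)}`. -/
noncomputable def Cv (I : Ideal (MvPolynomial (Fin n) k)) (v : Fin n → ℝ) :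
    Set (Fin n → ℝ) :=
  closure {u : Fin n → ℝ | initialFormIdeal u I = initialFormIdeal v I}

/-- `F` is a face of `C`: either empty or the set of maximizers over `C` of a
linear functional. -/
def IsFaceOf (C F : Set (Fin n → ℝ)) : Prop :=
  F = ∅ ∨ ∃ w : Fin n → ℝ, F = {x ∈ C | ∀ y ∈ C, ∑ i, w i * y i ≤ ∑ i, w i * x i}

/-- The Gröbner fan of `I`: all nonempty faces of the cones `C_v(I)`, `v ∈ ℝ^n_{>0}`. -/
noncomputable def GroebnerFan (I : Ideal (MvPolynomial (Fin n) k)) :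
    Set (Set (Fin n → ℝ)) :=
  {F | F.Nonempty ∧ ∃ v : Fin n → ℝ, (∀ i, 0 < v i) ∧ IsFaceOf (Cv I v) F}

/-- `G` is a (finite) Gröbner basis of `I` w.r.t. `τ`. -/
def IsGroebnerBasis (τ : TermOrder n) (I : Ideal (MvPolynomial (Fin n) k))
    (G : Set (MvPolynomial (Fin n) k)) : Prop :=
  G.Finite ∧ Ideal.span G = I ∧ τ.initialIdeal I = Ideal.span (τ.initialTerm '' G)

/-- `G` is the reduced Gröbner basis of `I` w.r.t. `τ`. -/
def IsReducedGroebnerBasis (τ : TermOrder n) (I : Ideal (MvPolynomial (Fin n) k))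
    (G : Set (MvPolynomial (Fin n) k)) : Prop :=
  IsGroebnerBasis τ I G ∧
  (∀ g ∈ G, g.coeff (τ.leadExp g) = 1) ∧
  (∀ g ∈ G, ∀ α ∈ g.support, α ≠ τ.leadExp g →
    (monomial α 1 : MvPolynomial (Fin n) k) ∉ τ.initialIdeal I) ∧
  (∀ g ∈ G, Ideal.span (τ.initialTerm '' (G \ {g})) ≠ τ.initialIdeal I)

/-! ### Weighted degrees and linear functionals -/

theorem wdeg_add (w : Fin n → ℝ) (α β : Fin n →₀ ℕ) :
    wdeg w (α + β) = wdeg w α + wdeg w β := by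
  simp [wdeg, mul_add, Finset.sum_add_distrib]

theorem wdeg_sub_wdeg (w : Fin n → ℝ) (α β : Fin n →₀ ℕ) :
    wdeg w α - wdeg w β = ∑ i, w i * ((α i : ℝ) - (β i : ℝ)) := by
  simp [wdeg, mul_sub, Finset.sum_sub_distrib]

theorem continuous_wdeg (α : Fin n →₀ ℕ) : Continuous fun w : Fin n → ℝ => wdeg w α := by
  unfold wdeg; fun_prop

theorem cast_sub_ne_zero {α β : Fin n →₀ ℕ} (h : α ≠ β) :
    (fun i => (α i : ℝ) - (β i : ℝ)) ≠ 0 := by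
  intro h0
  apply h
  ext i
  have := congrFun h0 i
  simp only [Pi.zero_apply, sub_eq_zero] at this
  exact_mod_cast this

/-- For a positive weight, only finitely many monomials lie below a given weighted degree; this is
what makes reduction to normal form terminate. -/
theorem finite_wdeg_le {v : Fin n → ℝ} (hv : ∀ i, 0 < v i) (D : ℝ) :
    {α : Fin n →₀ ℕ | wdeg v α ≤ D}.Finite := by
  let e : Fin n →₀ ℕ := Finsupp.equivFunOnFinite.symm fun i => ⌊D / v i⌋₊
  refine (Set.finite_Iic e).subset fun α hα i => ?_
  have h1 : v i * (α i : ℝ) ≤ D := le_trans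
    (Finset.single_le_sum (f := fun i => v i * (α i : ℝ))
      (fun j _ => mul_nonneg (hv j).le (Nat.cast_nonneg _)) (Finset.mem_univ i)) hα
  change α i ≤ ⌊D / v i⌋₊
  apply Nat.le_floor
  rw [le_div_iff₀ (hv i)]
  linarith

/-- A nonzero linear functional that is nonnegative on a set is positive on its interior. -/
theorem pos_of_mem_interior {S : Set (Fin n → ℝ)} {x d : Fin n → ℝ} (hx : x ∈ interior S)
    (hd : d ≠ 0) (h : ∀ y ∈ S, 0 ≤ ∑ i, y i * d i) : 0 < ∑ i, x i * d i := by
  have hc : Continuous fun t : ℝ => x - t • d := by fun_prop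
  have h0 : (fun t : ℝ => x - t • d) ⁻¹' S ∈ nhds (0 : ℝ) := by
    apply hc.continuousAt.preimage_mem_nhds
    simpa using mem_interior_iff_mem_nhds.1 hx
  obtain ⟨ε, hε, hball⟩ := Metric.mem_nhds_iff.1 h0
  have h2 := h _ (hball (show ε / 2 ∈ Metric.ball (0 : ℝ) ε by
    simpa [abs_of_pos hε] using hε))
  have h3 : ∑ i, (x - (ε / 2) • d) i * d i = ∑ i, x i * d i - ε / 2 * ∑ i, d i * d i := by
    simp only [Pi.sub_apply, Pi.smul_apply, smul_eq_mul, sub_mul, Finset.sum_sub_distrib,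
      Finset.mul_sum, mul_assoc]
  have h4 : 0 < ∑ i, d i * d i := by
    obtain ⟨i, hi⟩ := Function.ne_iff.1 hd
    exact Finset.sum_pos' (fun j _ => mul_self_nonneg _)
      ⟨i, Finset.mem_univ i, mul_self_pos.2 hi⟩
  rw [h3] at h2
  nlinarith [mul_pos hε h4]

/-- A relative interior point `v` of `F` can be pushed slightly away from, or towards, any other
point of `F` without leaving the relative interior. No convexity of `F` is used. -/
theorem exists_intrinsicInterior {F : Set (Fin n → ℝ)} {v x : Fin n → ℝ}
    (hv : v ∈ intrinsicInterior ℝ F) (hx : x ∈ F) :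
    ∃ ε : ℝ, 0 < ε ∧ v + ε • (x - v) ∈ intrinsicInterior ℝ F ∧
      v - ε • (x - v) ∈ intrinsicInterior ℝ F := by
  have hvF := intrinsicInterior_subset hv
  have hmem : ∀ t : ℝ, v + t • (x - v) ∈ affineSpan ℝ F := fun t => by
    have := AffineMap.lineMap_mem t (subset_affineSpan ℝ F hvF) (subset_affineSpan ℝ F hx)
    rwa [AffineMap.lineMap_apply_module', add_comm] at this
  let g : ℝ → affineSpan ℝ F := fun t => ⟨v + t • (x - v), hmem t⟩
  have hg : Continuous g := by
    apply Continuous.subtype_mk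
    fun_prop
  obtain ⟨y, hy, hyv⟩ := mem_intrinsicInterior.1 hv
  have h0 : g ⁻¹' (interior ((↑) ⁻¹' F : Set (affineSpan ℝ F))) ∈ nhds (0 : ℝ) := by
    apply hg.continuousAt.preimage_mem_nhds
    have : g 0 = y := by
      apply Subtype.ext
      simp [g, hyv]
    rw [this]
    exact isOpen_interior.mem_nhds hy
  obtain ⟨ε, hε, hball⟩ := Metric.mem_nhds_iff.1 h0
  refine ⟨ε / 2, by positivity, ?_, ?_⟩
  · exact mem_intrinsicInterior.2 ⟨_, hball (show ε / 2 ∈ Metric.ball (0 : ℝ) ε by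
      simpa [abs_of_pos hε] using hε), rfl⟩
  · refine mem_intrinsicInterior.2 ⟨_, hball (show -(ε / 2) ∈ Metric.ball (0 : ℝ) ε by
      simpa [abs_of_pos hε] using hε), ?_⟩
    simp only [g]
    module

/-- A linear functional that is nonnegative on `F` and vanishes at a relative interior point
vanishes on all of `F`. -/
theorem eq_zero_of_intrinsicInterior {F : Set (Fin n → ℝ)} {v d : Fin n → ℝ}
    (hv : v ∈ intrinsicInterior ℝ F) (h : ∀ y ∈ F, 0 ≤ ∑ i, y i * d i)
    (h0 : ∑ i, v i * d i = 0) : ∀ x ∈ F, ∑ i, x i * d i = 0 := by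
  intro x hx
  obtain ⟨ε, hε, -, h2⟩ := exists_intrinsicInterior hv hx
  have h3 := h _ (intrinsicInterior_subset h2)
  have h4 : ∑ i, (v - ε • (x - v)) i * d i
      = (1 + ε) * ∑ i, v i * d i - ε * ∑ i, x i * d i := by
    rw [Finset.mul_sum, Finset.mul_sum, ← Finset.sum_sub_distrib]
    refine Finset.sum_congr rfl fun i _ => ?_
    simp only [Pi.sub_apply, Pi.smul_apply, smul_eq_mul]
    ring
  rw [h4, h0] at h3
  have h5 := h x hx
  nlinarith

/-! ### Initial forms and initial ideals of a weight -/

open Classical in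
theorem coeff_initialForm (w : Fin n → ℝ) (f : MvPolynomial (Fin n) k) (α : Fin n →₀ ℕ) :
    coeff α (initialForm w f) =
      if ∀ β ∈ f.support, wdeg w β ≤ wdeg w α then coeff α f else 0 := by
  unfold initialForm
  rw [coeff_sum]
  simp only [coeff_monomial]
  rw [Finset.sum_ite_eq']
  by_cases hα : α ∈ f.support
  · simp [Finset.mem_filter, hα]
  · have : coeff α f = 0 := notMem_support_iff.1 hα
    simp [Finset.mem_filter, this]

theorem initialForm_mem {I : Ideal (MvPolynomial (Fin n) k)} (w : Fin n → ℝ)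
    {f : MvPolynomial (Fin n) k} (hf : f ∈ I) : initialForm w f ∈ initialFormIdeal w I :=
  Ideal.subset_span ⟨f, hf, rfl⟩

theorem exists_max_wdeg (w : Fin n → ℝ) {f : MvPolynomial (Fin n) k} (hf : f ≠ 0) :
    ∃ α ∈ f.support, ∀ β ∈ f.support, wdeg w β ≤ wdeg w α :=
  Finset.exists_max_image _ _ (Finsupp.support_nonempty_iff.2 (by simpa using hf))

/-- Each homogeneous piece of an element of `in_w(I)`, if nonzero, is the initial form of an element
of `I`. -/
theorem exists_lift (w : Fin n → ℝ) (I : Ideal (MvPolynomial (Fin n) k))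
    {p : MvPolynomial (Fin n) k} (hp : p ∈ initialFormIdeal w I) :
    ∀ D : ℝ, ∃ f ∈ I, (∀ β ∈ f.support, wdeg w β ≤ D) ∧
      ∀ α, wdeg w α = D → coeff α f = coeff α p := by
  classical
  unfold initialFormIdeal Ideal.span at hp
  induction hp using Submodule.span_induction with
  | mem p hp =>
    obtain ⟨f, hf, rfl⟩ := hp
    intro D
    by_cases hD : ∃ α ∈ f.support, (∀ β ∈ f.support, wdeg w β ≤ wdeg w α) ∧ wdeg w α = D
    · obtain ⟨α, hα, hmax, rfl⟩ := hD
      refine ⟨f, hf, hmax, fun γ hγ => ?_⟩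
      rw [coeff_initialForm, if_pos]
      rwa [hγ]
    · refine ⟨0, I.zero_mem, by simp, fun α hα => ?_⟩
      rw [coeff_initialForm]
      split_ifs with h
      · by_contra hne
        exact hD ⟨α, mem_support_iff.2 (Ne.symm hne), h, hα⟩
      · simp
  | zero => exact fun D => ⟨0, I.zero_mem, by simp, by simp⟩
  | add p q _ _ hp hq =>
    intro D
    obtain ⟨f, hf, hf1, hf2⟩ := hp D
    obtain ⟨g, hg, hg1, hg2⟩ := hq D
    refine ⟨f + g, I.add_mem hf hg, fun β hβ => ?_, fun α hα => ?_⟩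
    · rcases Finset.mem_union.1 (support_add hβ) with h | h
      · exact hf1 _ h
      · exact hg1 _ h
    · rw [coeff_add, coeff_add, hf2 α hα, hg2 α hα]
  | smul a p _ hp =>
    induction a using MvPolynomial.induction_on' with
    | monomial s c =>
      intro D
      obtain ⟨f, hf, hf1, hf2⟩ := hp (D - wdeg w s)
      refine ⟨monomial s c * f, I.mul_mem_left _ hf, fun β hβ => ?_, fun α hα => ?_⟩
      · rw [mem_support_iff, coeff_monomial_mul'] at hβ
        split_ifs at hβ with hs
        · have := hf1 (β - s) (mem_support_iff.2 (right_ne_zero_of_mul hβ))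
          rw [← tsub_add_cancel_of_le hs, wdeg_add]
          linarith
        · exact absurd rfl hβ
      · rw [smul_eq_mul, coeff_monomial_mul', coeff_monomial_mul']
        split_ifs with hs
        · rw [hf2]
          rw [← hα]
          nth_rewrite 2 [← tsub_add_cancel_of_le hs]
          rw [wdeg_add]
          ring
        · rfl
    | add a b ha hb =>
      intro D
      obtain ⟨f, hf, hf1, hf2⟩ := ha D
      obtain ⟨g, hg, hg1, hg2⟩ := hb D
      refine ⟨f + g, I.add_mem hf hg, fun β hβ => ?_, fun α hα => ?_⟩
      · rcases Finset.mem_union.1 (support_add hβ) with h | h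
        · exact hf1 _ h
        · exact hg1 _ h
      · rw [add_smul, coeff_add, coeff_add, hf2 α hα, hg2 α hα]

open Classical in
/-- The part of `p` of weighted degree `D`. -/
noncomputable def homPart (w : Fin n → ℝ) (D : ℝ) (p : MvPolynomial (Fin n) k) :
    MvPolynomial (Fin n) k :=
  ∑ α ∈ p.support.filter (fun α => wdeg w α = D), monomial α (coeff α p)

open Classical in
theorem coeff_homPart (w : Fin n → ℝ) (D : ℝ) (p : MvPolynomial (Fin n) k) (α : Fin n →₀ ℕ) :
    coeff α (homPart w D p) = if wdeg w α = D then coeff α p else 0 := by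
  unfold homPart
  rw [coeff_sum]
  simp only [coeff_monomial]
  rw [Finset.sum_ite_eq']
  by_cases hα : α ∈ p.support
  · simp [Finset.mem_filter, hα]
  · have : coeff α p = 0 := notMem_support_iff.1 hα
    simp [Finset.mem_filter, this]

/-- `in_w(I)` is a homogeneous ideal for the grading by `w`. -/
theorem homPart_mem (w : Fin n → ℝ) (I : Ideal (MvPolynomial (Fin n) k))
    {p : MvPolynomial (Fin n) k} (hp : p ∈ initialFormIdeal w I) (D : ℝ) :
    homPart w D p ∈ initialFormIdeal w I := by
  classical
  obtain ⟨f, hf, hf1, hf2⟩ := exists_lift w I hp D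
  by_cases h : ∃ α ∈ f.support, wdeg w α = D
  · obtain ⟨α, hα, rfl⟩ := h
    convert initialForm_mem w hf using 1
    ext β
    rw [coeff_homPart, coeff_initialForm]
    by_cases hβ : wdeg w β = wdeg w α
    · rw [if_pos hβ, if_pos (by rwa [hβ]), hf2 β hβ]
    · rw [if_neg hβ]
      split_ifs with hmax
      · by_contra hne
        exact hβ (le_antisymm (hf1 β (mem_support_iff.2 (Ne.symm hne))) (hmax α hα))
      · rfl
  · convert Ideal.zero_mem _
    ext β
    rw [coeff_homPart, coeff_zero]
    split_ifs with hβ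
    · rw [← hf2 β hβ]
      by_contra hne
      exact h ⟨β, mem_support_iff.2 hne, hβ⟩
    · rfl

/-- An ideal that is homogeneous for every weight of a set of weights separating all pairs of
monomials is a monomial ideal. -/
theorem monomial_mem_of_separating {J : Ideal (MvPolynomial (Fin n) k)} {K : Set (Fin n → ℝ)}
    (hhom : ∀ u ∈ K, ∀ p ∈ J, ∀ D, homPart u D p ∈ J)
    (hsep : ∀ α β : Fin n →₀ ℕ, α ≠ β → ∃ u ∈ K, wdeg u α ≠ wdeg u β)
    {p : MvPolynomial (Fin n) k} (hp : p ∈ J) {α : Fin n →₀ ℕ} (hα : α ∈ p.support) :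
    monomial α (1 : k) ∈ J := by
  classical
  induction hN : p.support.card using Nat.strong_induction_on generalizing p with
  | _ N ih =>
  by_cases h1 : ∃ β ∈ p.support, β ≠ α
  · obtain ⟨β, hβ, hβα⟩ := h1
    obtain ⟨u, hu, huβ⟩ := hsep β α hβα
    have hsub : (homPart u (wdeg u α) p).support ⊂ p.support := by
      rw [Finset.ssubset_iff_of_subset]
      · refine ⟨β, hβ, ?_⟩
        rw [notMem_support_iff, coeff_homPart, if_neg huβ]
      · intro γ hγ
        rw [mem_support_iff, coeff_homPart] at hγ
        rw [mem_support_iff]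
        intro h0
        simp [h0] at hγ
    refine ih _ (hN ▸ Finset.card_lt_card hsub) (hhom u hu p hp _) ?_ rfl
    rw [mem_support_iff, coeff_homPart, if_pos rfl]
    exact mem_support_iff.1 hα
  · push Not at h1
    have hpm : p = monomial α (coeff α p) := by
      ext γ
      rw [coeff_monomial]
      split_ifs with h
      · rw [h]
      · by_contra hne
        exact h (h1 γ (mem_support_iff.2 hne)).symm
    have := J.mul_mem_left (C (coeff α p)⁻¹) hp
    rw [hpm, C_mul_monomial, coeff_monomial, if_pos rfl,
      inv_mul_cancel₀ (mem_support_iff.1 hα)] at this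
    exact this

/-! ### Marked bases of normal forms -/

open Classical in
/-- The vector space basis of `I` attached to a monomial initial ideal with set of monomials `N`:
`f m = m - (normal form of m)` for `m ∈ N`. Its leading monomial `m` is (weakly) maximal in
`f m` for all weights in the cone `C`. -/
structure IsMarkedBasis (I : Ideal (MvPolynomial (Fin n) k)) (C : Set (Fin n → ℝ))
    (N : Set (Fin n →₀ ℕ)) (f : (Fin n →₀ ℕ) → MvPolynomial (Fin n) k) : Prop where
  mem : ∀ m ∈ N, f m ∈ I
  coeff_self : ∀ m ∈ N, coeff m (f m) = 1
  tail : ∀ m ∈ N, ∀ t ∈ (f m).support, t ≠ m → t ∉ N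
  le : ∀ x ∈ C, ∀ m ∈ N, ∀ t ∈ (f m).support, wdeg x t ≤ wdeg x m
  expand : ∀ g ∈ I, g = ∑ m ∈ g.support.filter (· ∈ N), coeff m g • f m

/-- Every class of weights whose closure is full-dimensional and which contains a positive weight
has a monomial initial ideal, hence a marked basis of normal forms. -/
theorem exists_markedBasis (I : Ideal (MvPolynomial (Fin n) k)) {v : Fin n → ℝ}
    (hv : ∀ i, 0 < v i) (hint : (interior (Cv I v)).Nonempty) :
    ∃ f, IsMarkedBasis I (Cv I v)
      {b : Fin n →₀ ℕ | monomial b (1 : k) ∈ initialFormIdeal v I} f := by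
  classical
  set J := initialFormIdeal v I with hJ
  set N := {b : Fin n →₀ ℕ | monomial b (1 : k) ∈ J} with hN
  set K := {u : Fin n → ℝ | initialFormIdeal u I = J} with hK
  have hcl : Cv I v = closure K := rfl
  have hvK : v ∈ K := rfl
  have hmon : ∀ p ∈ J, ∀ α ∈ p.support, monomial α (1 : k) ∈ J := by
    intro p hp α hα
    refine monomial_mem_of_separating (K := K) (fun u hu p hp D => ?_) (fun α β hne => ?_) hp hα
    · have hu' : initialFormIdeal u I = J := hu
      rw [← hu'] at hp ⊢
      exact homPart_mem u I hp D
    · by_contra! hall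
      have hall' : ∀ u ∈ Cv I v, wdeg u α = wdeg u β := fun u hu =>
        closure_minimal (t := {u | wdeg u α = wdeg u β}) hall
          (isClosed_eq (continuous_wdeg α) (continuous_wdeg β)) hu
      obtain ⟨x, hx⟩ := hint
      have := pos_of_mem_interior hx (cast_sub_ne_zero hne) fun y hy => by
        rw [← wdeg_sub_wdeg, hall' y hy, sub_self]
      rw [← wdeg_sub_wdeg, hall' x (interior_subset hx), sub_self] at this
      exact lt_irrefl _ this
  have hne : ∀ u ∈ K, ∀ g ∈ I, ∀ α ∈ g.support, (∀ β ∈ g.support, wdeg u β ≤ wdeg u α) →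
      α ∈ N := by
    intro u hu g hg α hα hmax
    have hu' : initialFormIdeal u I = J := hu
    have h1 := initialForm_mem u hg
    rw [hu'] at h1
    refine hmon _ h1 α ?_
    rw [mem_support_iff, coeff_initialForm, if_pos hmax]
    exact mem_support_iff.1 hα
  have huniq : ∀ g ∈ I, (∀ α ∈ g.support, α ∉ N) → g = 0 := by
    intro g hg hstd
    by_contra h0
    obtain ⟨α, hα, hmax⟩ := exists_max_wdeg v h0
    exact hstd α hα (hne v hvK g hg α hα hmax)
  -- Division: modulo `I`, each monomial is a combination of monomials outside `N`.
  let W : Submodule k (MvPolynomial (Fin n) k) :=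
    I.restrictScalars k ⊔ Submodule.span k ((fun s => monomial s (1 : k)) '' Nᶜ)
  have hW : ∀ m : Fin n →₀ ℕ, monomial m (1 : k) ∈ W := by
    intro m
    induction hc : Set.ncard {m' : Fin n →₀ ℕ | wdeg v m' < wdeg v m}
      using Nat.strong_induction_on generalizing m with
    | _ c ih =>
    by_cases hm : m ∈ N
    · obtain ⟨f, hf, hf1, hf2⟩ := exists_lift v I hm (wdeg v m)
      have h1 : monomial m (1 : k) = f + (monomial m 1 - f) := by ring
      rw [h1]
      refine W.add_mem (Submodule.mem_sup_left hf) ?_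
      rw [as_sum (monomial m (1 : k) - f)]
      refine W.sum_mem fun t ht => ?_
      have ht' : wdeg v t < wdeg v m := by
        have hne' : wdeg v t ≠ wdeg v m := fun h => by
          rw [mem_support_iff, coeff_sub, hf2 t h, sub_self] at ht
          exact ht rfl
        refine lt_of_le_of_ne ?_ hne'
        rw [mem_support_iff, coeff_sub, coeff_monomial,
          if_neg (fun h => hne' (by rw [h])), zero_sub, neg_ne_zero] at ht
        exact hf1 t (mem_support_iff.2 ht)
      rw [show monomial t (coeff t (monomial m (1 : k) - f))
        = (coeff t (monomial m (1 : k) - f)) • monomial t (1 : k) by simp [smul_monomial]]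
      refine W.smul_mem _ (ih _ ?_ t rfl)
      rw [← hc]
      refine Set.ncard_lt_ncard ⟨fun s hs => lt_trans hs ht', fun h => ?_⟩
        ((finite_wdeg_le hv (wdeg v m)).subset fun s hs => le_of_lt (show wdeg v s < wdeg v m from hs))
      have htt : wdeg v t < wdeg v t := h (show t ∈ {m' | wdeg v m' < wdeg v m} from ht')
      exact lt_irrefl _ htt
    · exact Submodule.mem_sup_right (Submodule.subset_span ⟨m, hm, rfl⟩)
  have hf : ∀ m : Fin n →₀ ℕ, ∃ f ∈ I, ∀ t ∈ N, coeff t f = coeff t (monomial m (1 : k)) := by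
    intro m
    obtain ⟨f, hf, r, hr, hfr⟩ := Submodule.mem_sup.1 (hW m)
    refine ⟨f, hf, fun t ht => ?_⟩
    have hr0 : coeff t r = 0 := by
      clear hfr
      induction hr using Submodule.span_induction with
      | mem r hr =>
        obtain ⟨s, hs, rfl⟩ := hr
        rw [coeff_monomial, if_neg]
        rintro rfl
        exact hs ht
      | zero => simp
      | add a b _ _ ha hb => rw [coeff_add, ha, hb, add_zero]
      | smul c a _ ha => rw [coeff_smul, ha, smul_zero]
    rw [← hfr, coeff_add, hr0, add_zero]
  choose f hfI hfN using hf
  have hself : ∀ m ∈ N, coeff m (f m) = 1 := fun m hm => by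
    rw [hfN m m hm, coeff_monomial, if_pos rfl]
  have htail : ∀ m ∈ N, ∀ t ∈ (f m).support, t ≠ m → t ∉ N := fun m hm t ht htm htN => by
    rw [mem_support_iff, hfN m t htN, coeff_monomial, if_neg htm.symm] at ht
    exact ht rfl
  refine ⟨f, fun m _ => hfI m, hself, htail, ?_, ?_⟩
  · intro x hx m hm t ht
    refine closure_minimal (t := {x | wdeg x t ≤ wdeg x m}) (fun u hu => ?_)
      (isClosed_le (continuous_wdeg t) (continuous_wdeg m)) hx
    have hf0 : f m ≠ 0 := fun h => by
      have := hself m hm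
      rw [h, coeff_zero] at this
      exact zero_ne_one this
    obtain ⟨α, hα, hmax⟩ := exists_max_wdeg u hf0
    have hαm : α = m := by
      by_contra h
      exact htail m hm α hα h (hne u hu _ (hfI m) α hα hmax)
    exact hαm ▸ hmax t ht
  · intro g hg
    rw [← sub_eq_zero]
    refine huniq _ (I.sub_mem hg (I.sum_mem fun m _ => ?_)) fun α hα hαN => ?_
    · rw [smul_eq_C_mul]
      exact I.mul_mem_left _ (hfI m)
    · rw [mem_support_iff, coeff_sub, coeff_sum] at hα
      apply hα
      simp only [coeff_smul, hfN _ α hαN, coeff_monomial, smul_eq_mul, mul_ite, mul_one, mul_zero]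
      rw [Finset.sum_ite_eq']
      by_cases h : α ∈ g.support
      · simp [Finset.mem_filter, h, hαN]
      · simp [Finset.mem_filter, notMem_support_iff.1 h]

namespace IsMarkedBasis

variable {I : Ideal (MvPolynomial (Fin n) k)} {C : Set (Fin n → ℝ)} {N : Set (Fin n →₀ ℕ)}
  {f : (Fin n →₀ ℕ) → MvPolynomial (Fin n) k}

theorem lt (hB : IsMarkedBasis I C N f) {x : Fin n → ℝ} (hx : x ∈ interior C)
    {m t : Fin n →₀ ℕ} (hm : m ∈ N) (ht : t ∈ (f m).support) (htm : t ≠ m) :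
    wdeg x t < wdeg x m := by
  rw [← sub_pos, wdeg_sub_wdeg]
  refine pos_of_mem_interior hx (cast_sub_ne_zero htm.symm) fun y hy => ?_
  rw [← wdeg_sub_wdeg, sub_nonneg]
  exact hB.le y hy m hm t ht

theorem coeff_eq_zero (hB : IsMarkedBasis I C N f) {m t : Fin n →₀ ℕ} (hm : m ∈ N) (ht : t ∈ N)
    (htm : t ≠ m) : coeff t (f m) = 0 := by
  by_contra h
  exact hB.tail m hm t (mem_support_iff.2 h) htm ht

theorem exists_support (hB : IsMarkedBasis I C N f) {g : MvPolynomial (Fin n) k} (hg : g ∈ I)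
    {t : Fin n →₀ ℕ} (ht : t ∈ g.support) :
    ∃ m ∈ g.support, m ∈ N ∧ t ∈ (f m).support := by
  classical
  have h1 := hB.expand g hg
  by_contra! hall
  apply mem_support_iff.1 ht
  rw [h1, coeff_sum]
  refine Finset.sum_eq_zero fun m hm => ?_
  rw [Finset.mem_filter] at hm
  rw [coeff_smul, notMem_support_iff.1 (hall m hm.1 hm.2), smul_zero]

/-- For any weight `x` in the cone, the initial forms of the marked basis generate `in_x(I)`. -/
theorem initialFormIdeal_eq (hB : IsMarkedBasis I C N f) {x : Fin n → ℝ} (hx : x ∈ C) :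
    initialFormIdeal x I = Ideal.span ((fun m => initialForm x (f m)) '' N) := by
  classical
  refine le_antisymm (Ideal.span_le.2 ?_) (Ideal.span_le.2 ?_)
  · rintro _ ⟨g, hg, rfl⟩
    by_cases hg0 : g = 0
    · subst hg0
      simp [initialForm]
    obtain ⟨γ, hγ, hmax⟩ := exists_max_wdeg x hg0
    have h1 : initialForm x g = ∑ m ∈ g.support.filter (fun m => m ∈ N ∧ wdeg x m = wdeg x γ),
        coeff m g • initialForm x (f m) := by
      ext α
      rw [coeff_sum, coeff_initialForm]
      simp only [coeff_smul, coeff_initialForm]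
      by_cases hα : wdeg x α = wdeg x γ
      · rw [if_pos (by rwa [hα])]
        conv_lhs => rw [hB.expand g hg, coeff_sum]
        rw [← Finset.filter_filter, Finset.sum_filter (fun m => wdeg x m = wdeg x γ)]
        refine Finset.sum_congr rfl fun m hm => ?_
        rw [Finset.mem_filter] at hm
        rw [coeff_smul]
        split_ifs with h2 h3
        · rfl
        · exact absurd (fun β hβ => by rw [hα, ← h2]; exact hB.le x hx m hm.2 β hβ) h3
        · have : coeff α (f m) = 0 := by
            by_contra hne
            refine h2 (le_antisymm (hmax m hm.1) ?_)
            rw [← hα]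
            exact hB.le x hx m hm.2 α (mem_support_iff.2 hne)
          rw [this, smul_zero]
      · rw [Finset.sum_eq_zero]
        · split_ifs with h
          · by_contra hne
            exact hα (le_antisymm (hmax α (mem_support_iff.2 hne)) (h γ hγ))
          · rfl
        · intro m hm
          rw [Finset.mem_filter] at hm
          split_ifs with h
          · have : coeff α (f m) = 0 := by
              by_contra hne
              refine hα (le_antisymm ?_ ?_)
              · rw [← hm.2.2]
                exact hB.le x hx m hm.2.1 α (mem_support_iff.2 hne)
              · rw [← hm.2.2]
                apply h
                rw [mem_support_iff, hB.coeff_self m hm.2.1]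
                exact one_ne_zero
            rw [this, smul_zero]
          · exact smul_zero _
    rw [h1]
    refine Ideal.sum_mem _ fun m hm => ?_
    rw [Finset.mem_filter] at hm
    rw [smul_eq_C_mul]
    exact Ideal.mul_mem_left _ _ (Ideal.subset_span ⟨m, hm.2.1, rfl⟩)
  · rintro _ ⟨m, hm, rfl⟩
    exact initialForm_mem x (hB.mem m hm)

theorem initialForm_eq_monomial (hB : IsMarkedBasis I C N f) {x : Fin n → ℝ}
    (hx : x ∈ interior C) {m : Fin n →₀ ℕ} (hm : m ∈ N) :
    initialForm x (f m) = monomial m 1 := by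
  classical
  ext α
  rw [coeff_initialForm, coeff_monomial]
  by_cases hα : m = α
  · subst hα
    rw [if_pos rfl, if_pos (hB.le x (interior_subset hx) m hm), hB.coeff_self m hm]
  · rw [if_neg hα]
    split_ifs with h
    · by_contra hne
      refine absurd (hB.lt hx hm (mem_support_iff.2 hne) (Ne.symm hα)) (not_lt.2 (h m ?_))
      rw [mem_support_iff, hB.coeff_self m hm]
      exact one_ne_zero
    · rfl

/-- Two weights in the relative interior of the same subset of the cone have the same initial
ideal, because they give the marked basis the same initial forms. -/
theorem initialFormIdeal_congr (hB : IsMarkedBasis I C N f) {F : Set (Fin n → ℝ)} (hF : F ⊆ C)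
    {x y : Fin n → ℝ} (hx : x ∈ intrinsicInterior ℝ F) (hy : y ∈ intrinsicInterior ℝ F) :
    initialFormIdeal x I = initialFormIdeal y I := by
  classical
  have hx' := intrinsicInterior_subset hx
  have hy' := intrinsicInterior_subset hy
  rw [hB.initialFormIdeal_eq (hF hx'), hB.initialFormIdeal_eq (hF hy')]
  congr 1
  refine Set.image_congr fun m hm => ?_
  have key : ∀ a ∈ intrinsicInterior ℝ F, ∀ b ∈ F, ∀ t ∈ (f m).support,
      (∀ β ∈ (f m).support, wdeg a β ≤ wdeg a t) → ∀ β ∈ (f m).support, wdeg b β ≤ wdeg b t := by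
    intro a ha b hb t ht hmax β hβ
    have hm1 : m ∈ (f m).support := by
      rw [mem_support_iff, hB.coeff_self m hm]
      exact one_ne_zero
    have ha0 : wdeg a m - wdeg a t = 0 := sub_eq_zero.2 <|
      le_antisymm (hmax m hm1) (hB.le a (hF (intrinsicInterior_subset ha)) m hm t ht)
    rw [wdeg_sub_wdeg] at ha0
    have hb0 := eq_zero_of_intrinsicInterior ha (fun z hz => by
      rw [← wdeg_sub_wdeg, sub_nonneg]
      exact hB.le z (hF hz) m hm t ht) ha0 b hb
    rw [← wdeg_sub_wdeg] at hb0
    have := hB.le b (hF hb) m hm β hβ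
    linarith
  ext α
  rw [coeff_initialForm, coeff_initialForm]
  by_cases hα : α ∈ (f m).support
  · rw [if_congr ⟨key x hx y hy' α hα, key y hy x hx' α hα⟩ rfl rfl]
  · simp [notMem_support_iff.1 hα]

/-- Refining a weight `v` of the cone by an interior weight `w`, the leading monomial of any
element of `I` lies in `N`. -/
theorem leading_mem (hB : IsMarkedBasis I C N f) {v w : Fin n → ℝ} (hv : v ∈ C)
    (hw : w ∈ interior C) {g : MvPolynomial (Fin n) k} (hg : g ∈ I) {t : Fin n →₀ ℕ}
    (ht : t ∈ g.support) (hmax : ∀ β ∈ g.support, wdeg v β ≤ wdeg v t)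
    (hmax' : ∀ β ∈ g.support, wdeg v β = wdeg v t → wdeg w β ≤ wdeg w t) : t ∈ N := by
  obtain ⟨m, hm, hmN, htm⟩ := hB.exists_support hg ht
  by_cases h : t = m
  · rwa [h]
  · have h1 := hmax' m hm (le_antisymm (hmax m hm) (hB.le v hv m hmN t htm))
    exact absurd (hB.lt hw hmN htm h) (not_lt.2 h1)

end IsMarkedBasis

/-- For `w` in the interior of a cone `C` of the Gröbner fan, the monomials of `in_w(I)` carry a
marked basis that is valid on a set `D` containing `C`. Here `D` is the class closure of which `C`
is a face, on whose interior the initial ideal has constant monomials. -/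
theorem exists_markedBasis_of_mem_fan {I : Ideal (MvPolynomial (Fin n) k)} {C : Set (Fin n → ℝ)}
    (hC : C ∈ GroebnerFan I) {w : Fin n → ℝ} (hw : w ∈ interior C) :
    ∃ D f, C ⊆ D ∧ IsMarkedBasis I D
      {b : Fin n →₀ ℕ | monomial b (1 : k) ∈ initialFormIdeal w I} f := by
  obtain ⟨hne, v, hv, hface⟩ := hC
  have hsub : C ⊆ Cv I v := by
    rcases hface with h | ⟨a, h⟩
    · simp [h]
    · rw [h]
      exact fun x hx => hx.1
  have hw' := interior_mono hsub hw
  obtain ⟨f, hB⟩ := exists_markedBasis I hv ⟨w, hw'⟩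
  refine ⟨Cv I v, f, hsub, ?_⟩
  convert hB using 1
  ext b
  constructor
  · intro hb
    have hle : initialFormIdeal w I ≤ initialFormIdeal v I := by
      rw [hB.initialFormIdeal_eq (interior_subset hw'), Ideal.span_le]
      rintro _ ⟨m, hm, rfl⟩
      change initialForm w (f m) ∈ initialFormIdeal v I
      rw [hB.initialForm_eq_monomial hw' hm]
      exact hm
    exact hle hb
  · intro hb
    change monomial b (1 : k) ∈ initialFormIdeal w I
    rw [← hB.initialForm_eq_monomial hw' hb]
    exact initialForm_mem w (hB.mem b hb)

/-! ### Monomials of equal degree lie on a line directed by `q - p` -/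

/-- The orthogonal complement of a set spanning a hyperplane with normal `d` consists of the
multiples of `d`. -/
theorem exists_smul_of_orthogonal {F : Set (Fin n → ℝ)} (hn : 2 ≤ n)
    (hF : Module.finrank ℝ ↥(vectorSpan ℝ F) = n - 1) {d e : Fin n → ℝ} (hd0 : d ≠ 0)
    (hd : ∀ x ∈ F, x ⬝ᵥ d = 0) (he : ∀ x ∈ F, x ⬝ᵥ e = 0) : ∃ c : ℝ, e = c • d := by
  have hperp : ∀ y : Fin n → ℝ, (∀ x ∈ F, x ⬝ᵥ y = 0) → ∀ x ∈ vectorSpan ℝ F, x ⬝ᵥ y = 0 := by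
    intro y hy x hx
    rw [vectorSpan_def] at hx
    induction hx using Submodule.span_induction with
    | mem x hx =>
      obtain ⟨a, ha, b, hb, rfl⟩ := hx
      simp [hy a ha, hy b hb]
    | zero => simp
    | add a b _ _ ha hb => rw [add_dotProduct, ha, hb, add_zero]
    | smul c a _ ha => rw [smul_dotProduct, ha, smul_zero]
  have hdd : d ⬝ᵥ d ≠ 0 := fun h => hd0 (dotProduct_self_eq_zero.1 h)
  have hinf : vectorSpan ℝ F ⊓ Submodule.span ℝ {d} = ⊥ := by
    rw [eq_bot_iff]
    rintro x ⟨hx, hx'⟩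
    obtain ⟨c, rfl⟩ := Submodule.mem_span_singleton.1 hx'
    have := hperp d hd _ hx
    rw [smul_dotProduct, smul_eq_mul, mul_eq_zero, or_iff_left hdd] at this
    simp [this]
  have htop : vectorSpan ℝ F ⊔ Submodule.span ℝ {d} = ⊤ := by
    apply Submodule.eq_top_of_finrank_eq
    have := Submodule.finrank_sup_add_finrank_inf_eq (vectorSpan ℝ F) (Submodule.span ℝ {d})
    rw [hinf, finrank_bot, hF, finrank_span_singleton hd0] at this
    rw [Module.finrank_fin_fun]
    omega
  refine ⟨(d ⬝ᵥ e) / (d ⬝ᵥ d), ?_⟩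
  -- The component of `e` orthogonal to `d` is orthogonal to everything.
  set e' := e - ((d ⬝ᵥ e) / (d ⬝ᵥ d)) • d with he'
  have h1 : ∀ x ∈ F, x ⬝ᵥ e' = 0 := fun x hx => by
    rw [he', dotProduct_sub, dotProduct_smul, he x hx, hd x hx, smul_zero, sub_zero]
  have h2 : d ⬝ᵥ e' = 0 := by
    rw [he', dotProduct_sub, dotProduct_smul, smul_eq_mul, div_mul_cancel₀ _ hdd, sub_self]
  have h3 : e' ∈ vectorSpan ℝ F ⊔ Submodule.span ℝ {d} := htop ▸ Submodule.mem_top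
  obtain ⟨a, ha, b, hb, hab⟩ := Submodule.mem_sup.1 h3
  obtain ⟨c, rfl⟩ := Submodule.mem_span_singleton.1 hb
  have h4 : e' ⬝ᵥ e' = 0 := by
    nth_rewrite 1 [← hab]
    rw [add_dotProduct, hperp e' h1 a ha, smul_dotProduct, h2, smul_zero, add_zero]
  exact sub_eq_zero.1 (dotProduct_self_eq_zero.1 h4)

/-- If `F` lies in the span of the `n - 1` vectors `u i` and spans a hyperplane with normal `d`,
then every `u i` is orthogonal to `d`. -/
theorem orthogonal_of_subset_span {F : Set (Fin n → ℝ)}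
    (hF : Module.finrank ℝ ↥(vectorSpan ℝ F) = n - 1) {d : Fin n → ℝ}
    (hd : ∀ x ∈ F, x ⬝ᵥ d = 0) {u : Fin (n - 1) → Fin n → ℝ}
    (hu : F ⊆ Submodule.span ℝ (Set.range u)) (i : Fin (n - 1)) : u i ⬝ᵥ d = 0 := by
  have hle : Submodule.span ℝ F ≤ Submodule.span ℝ (Set.range u) := Submodule.span_le.2 hu
  have hvs : vectorSpan ℝ F ≤ Submodule.span ℝ F := by
    rw [vectorSpan_def, Submodule.span_le]
    rintro _ ⟨a, ha, b, hb, rfl⟩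
    exact Submodule.sub_mem _ (Submodule.subset_span ha) (Submodule.subset_span hb)
  have heq := Submodule.eq_of_le_of_finrank_le hle <| by
    calc Module.finrank ℝ (Submodule.span ℝ (Set.range u)) ≤ Fintype.card (Fin (n - 1)) :=
          finrank_range_le_card u
      _ = Module.finrank ℝ (vectorSpan ℝ F) := by rw [hF, Fintype.card_fin]
      _ ≤ Module.finrank ℝ (Submodule.span ℝ F) := Submodule.finrank_mono hvs
  have hmem : u i ∈ Submodule.span ℝ F := heq ▸ Submodule.subset_span ⟨i, rfl⟩
  generalize u i = y at hmem
  induction hmem using Submodule.span_induction with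
  | mem x hx => exact hd x hx
  | zero => simp
  | add a b _ _ ha hb => rw [add_dotProduct, ha, hb, add_zero]
  | smul c a _ ha => rw [smul_dotProduct, ha, smul_zero]

namespace TermOrder

theorem add_lt_add (τ : TermOrder n) {a b c d : Fin n →₀ ℕ} (h : τ.lt a b) (h' : τ.lt c d) :
    τ.lt (a + c) (b + d) := by
  have h2 := τ.add_right _ _ b h'
  rw [add_comm c, add_comm d] at h2
  exact τ.trans _ _ _ (τ.add_right _ _ c h) h2

theorem nsmul_lt (τ : TermOrder n) {a b : Fin n →₀ ℕ} (h : τ.lt a b) {N : ℕ} (hN : 0 < N) :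
    τ.lt (N • a) (N • b) := by
  induction N, hN using Nat.le_induction with
  | base => simpa using h
  | succ N _ ih =>
    rw [succ_nsmul, succ_nsmul]
    exact τ.add_lt_add ih h

/-- On a line of direction `q - p` with `p ≺ q`, the term order increases along `q - p`. The
real factor `c` is rational, so that clearing denominators reduces the claim to monomials. -/
theorem lt_of_line (τ : TermOrder n) {p q α β : Fin n →₀ ℕ} (hpq : τ.lt p q) {c : ℝ}
    (hc : 0 < c) (h : ∀ i, (α i : ℝ) - (β i : ℝ) = c * ((q i : ℝ) - (p i : ℝ))) :
    τ.lt β α := by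
  have hne : q ≠ p := by
    rintro rfl
    exact τ.irrefl _ hpq
  obtain ⟨i, hi⟩ := Function.ne_iff.1 (cast_sub_ne_zero hne)
  simp only [Pi.zero_apply] at hi
  set A := ((α i : ℤ) - (β i : ℤ)).natAbs with hA
  set E := ((q i : ℤ) - (p i : ℤ)).natAbs with hE
  have hA' : (A : ℝ) = c * E := by
    rw [hA, hE, Nat.cast_natAbs, Nat.cast_natAbs, Int.cast_abs, Int.cast_abs]
    push_cast
    rw [h i, abs_mul, abs_of_pos hc]
  have hE0 : 0 < E := by
    rw [hE, Int.natAbs_pos]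
    intro h0
    apply hi
    exact_mod_cast h0
  have hA0 : 0 < A := by
    have : (0 : ℝ) < A := hA' ▸ mul_pos hc (by exact_mod_cast hE0)
    exact_mod_cast this
  have heq : E • α + A • p = E • β + A • q := by
    ext j
    simp only [Finsupp.add_apply, Finsupp.smul_apply, smul_eq_mul]
    have : (E : ℝ) * α j + A * p j = E * β j + A * q j := by
      rw [hA']
      linear_combination (E : ℝ) * h j
    exact_mod_cast this
  by_contra hlt
  have hαβ : α ≠ β := by
    rintro rfl
    have := h i
    rw [sub_self, zero_eq_mul] at this
    exact this.elim hc.ne' hi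
  have h1 : τ.lt α β := (τ.total α β hαβ).resolve_right hlt
  have h2 := τ.add_lt_add (τ.nsmul_lt h1 hE0) (τ.nsmul_lt hpq hA0)
  rw [heq] at h2
  exact τ.irrefl _ h2

end TermOrder

/-! ### The comparison of leading monomials -/

/-- Corollary: for a directed edge `(C₁,C₂)` of the graph of the Gröbner fan
oriented by `≺`, with monomial initial ideals `M₁ = in_{w₁}(I)`,
`M₂ = in_{w₂}(I)` and grading `𝒜_v` (given by `u₁,…,u_{n−1} ∈ ℕ^n` spanning
the span of `C_v(I)`, `u₁` strictly positive), the degree-wise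
`≺`-order-preserving bijection `φ` from the monomials of `M₁` to those of `M₂`
satisfies `¬ (φ(x^b) ≺ x^b)` for every monomial `x^b ∈ M₁`. -/
theorem phi_not_lt (τ : TermOrder n) (I : Ideal (MvPolynomial (Fin n) k))
    (hn : 2 ≤ n)
    (C₁ C₂ : Set (Fin n → ℝ))
    (h₁ : C₁ ∈ GroebnerFan I) (h₂ : C₂ ∈ GroebnerFan I)
    (hint₁ : (interior C₁).Nonempty) (hint₂ : (interior C₂).Nonempty)
    (hne : C₁ ≠ C₂)
    (hfacet : Module.finrank ℝ ↥(vectorSpan ℝ (C₁ ∩ C₂)) = n - 1)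
    (p q : Fin n →₀ ℕ) (hpq : τ.lt p q)
    (horth : ∀ x ∈ C₁ ∩ C₂, ∑ i, x i * ((q i : ℝ) - (p i : ℝ)) = 0)
    (hneg : ∀ x ∈ C₁ \ C₂, ∑ i, x i * ((q i : ℝ) - (p i : ℝ)) < 0)
    (hpos : ∀ x ∈ C₂ \ C₁, 0 < ∑ i, x i * ((q i : ℝ) - (p i : ℝ)))
    (v : Fin n → ℝ) (hv : v ∈ intrinsicInterior ℝ (C₁ ∩ C₂))
    (w₁ w₂ : Fin n → ℝ) (hw₁ : w₁ ∈ interior C₁) (hw₂ : w₂ ∈ interior C₂)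
    (u : Fin (n - 1) → Fin n → ℕ)
    (hu1 : ∀ j, 0 < u ⟨0, by omega⟩ j)
    (hspan : Submodule.span ℝ (Set.range fun i => fun j => (u i j : ℝ)) =
      Submodule.span ℝ (Cv I v))
    (φ : (Fin n →₀ ℕ) → (Fin n →₀ ℕ))
    (hbij : Set.BijOn φ
      {b : Fin n →₀ ℕ | (monomial b (1 : k)) ∈ initialFormIdeal w₁ I}
      {b : Fin n →₀ ℕ | (monomial b (1 : k)) ∈ initialFormIdeal w₂ I})
    (hdeg : ∀ b ∈ {b : Fin n →₀ ℕ | (monomial b (1 : k)) ∈ initialFormIdeal w₁ I},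
      ∀ i, ∑ j, u i j * φ b j = ∑ j, u i j * b j)
    (hmono : ∀ b ∈ {b : Fin n →₀ ℕ | (monomial b (1 : k)) ∈ initialFormIdeal w₁ I},
      ∀ b' ∈ {b : Fin n →₀ ℕ | (monomial b (1 : k)) ∈ initialFormIdeal w₁ I},
      (∀ i, ∑ j, u i j * b j = ∑ j, u i j * b' j) →
      (τ.lt b b' ↔ τ.lt (φ b) (φ b'))) :
    ∀ b ∈ {b : Fin n →₀ ℕ | (monomial b (1 : k)) ∈ initialFormIdeal w₁ I},
      ¬ τ.lt (φ b) b := by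
  classical
  intro b hb hlt
  set N₁ := {b : Fin n →₀ ℕ | (monomial b (1 : k)) ∈ initialFormIdeal w₁ I} with hN₁
  set N₂ := {b : Fin n →₀ ℕ | (monomial b (1 : k)) ∈ initialFormIdeal w₂ I} with hN₂
  set F := C₁ ∩ C₂ with hF
  set d : Fin n → ℝ := fun i => (q i : ℝ) - (p i : ℝ) with hd
  obtain ⟨D₁, f₁, hD₁, hB₁⟩ := exists_markedBasis_of_mem_fan h₁ hw₁
  obtain ⟨D₂, f₂, hD₂, hB₂⟩ := exists_markedBasis_of_mem_fan h₂ hw₂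
  have hFD₂ : F ⊆ D₂ := Set.inter_subset_right.trans hD₂
  have hvF : v ∈ F := intrinsicInterior_subset hv
  have hd0 : d ≠ 0 := cast_sub_ne_zero fun h => τ.irrefl p (by rwa [h] at hpq)
  have hw₂d : 0 < ∑ i, w₂ i * d i := pos_of_mem_interior hw₂ hd0 fun y hy => by
    by_cases hy1 : y ∈ C₁
    · exact (horth y ⟨hy1, hy⟩).ge
    · exact (hpos y ⟨hy, hy1⟩).le
  -- `C_v(I)` contains a neighbourhood of `v` in the affine span of `F`.
  have hFspan : F ⊆ Submodule.span ℝ (Set.range fun i => fun j => (u i j : ℝ)) := by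
    rw [hspan]
    intro x hx
    obtain ⟨ε, hε, hmem, -⟩ := exists_intrinsicInterior hv hx
    have h1 : v + ε • (x - v) ∈ Submodule.span ℝ (Cv I v) :=
      Submodule.subset_span (subset_closure (hB₂.initialFormIdeal_congr hFD₂ hmem hv))
    have h2 : v ∈ Submodule.span ℝ (Cv I v) := Submodule.subset_span (subset_closure rfl)
    have h3 : x = v + ε⁻¹ • ((v + ε • (x - v)) - v) := by
      rw [add_sub_cancel_left, smul_smul, inv_mul_cancel₀ hε.ne', one_smul, add_sub_cancel]
    rw [h3]
    exact Submodule.add_mem _ h2 (Submodule.smul_mem _ _ (Submodule.sub_mem _ h1 h2))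
  have hud : ∀ i, ∑ j, (u i j : ℝ) * d j = 0 := orthogonal_of_subset_span hfacet horth hFspan
  have hline_deg : ∀ (α β : Fin n →₀ ℕ) (c : ℝ), (∀ j, (α j : ℝ) - (β j : ℝ) = c * d j) →
      ∀ i, ∑ j, u i j * α j = ∑ j, u i j * β j := by
    intro α β c h i
    have h1 : ∑ j, (u i j : ℝ) * ((α j : ℝ) - (β j : ℝ)) = 0 := by
      simp only [h, mul_left_comm _ c]
      rw [← Finset.mul_sum, hud, mul_zero]
    simp only [mul_sub, Finset.sum_sub_distrib, sub_eq_zero] at h1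
    exact_mod_cast h1
  have hdeg_F : ∀ α β : Fin n →₀ ℕ, (∀ i, ∑ j, u i j * α j = ∑ j, u i j * β j) →
      ∀ x ∈ F, wdeg x α = wdeg x β := by
    intro α β h x hx
    rw [← sub_eq_zero, wdeg_sub_wdeg]
    have hx' := hFspan hx
    change x ⬝ᵥ (fun i => (α i : ℝ) - (β i : ℝ)) = 0
    clear hx
    induction hx' using Submodule.span_induction with
    | mem x hx =>
      obtain ⟨i, rfl⟩ := hx
      change ∑ j, (u i j : ℝ) * ((α j : ℝ) - (β j : ℝ)) = 0
      simp only [mul_sub, Finset.sum_sub_distrib, sub_eq_zero]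
      exact_mod_cast h i
    | zero => simp
    | add a b _ _ ha hb => rw [add_dotProduct, ha, hb, add_zero]
    | smul c a _ ha => rw [smul_dotProduct, ha, smul_zero]
  have hfin : {s : Fin n →₀ ℕ | ∀ i, ∑ j, u i j * s j = ∑ j, u i j * b j}.Finite := by
    refine (finite_wdeg_le (v := fun j => (u ⟨0, by omega⟩ j : ℝ))
      (fun j => by exact_mod_cast hu1 j)
      (wdeg (fun j => (u ⟨0, by omega⟩ j : ℝ)) b)).subset fun s hs => ?_
    refine le_of_eq (a := wdeg _ s) ?_
    have h0 := hs ⟨0, by omega⟩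
    simp only [wdeg]
    exact_mod_cast h0
  -- `S`: monomials of `M₁` of the degree of `b` up to `b`. `T`: the same up to `φ b`.
  have hSfin : {s ∈ N₁ | (∀ i, ∑ j, u i j * s j = ∑ j, u i j * b j) ∧
      (s = b ∨ τ.lt s b)}.Finite := hfin.subset fun s hs => hs.2.1
  have hTfin : {s ∈ N₁ | (∀ i, ∑ j, u i j * s j = ∑ j, u i j * b j) ∧
      (s = φ b ∨ τ.lt s (φ b))}.Finite := hfin.subset fun s hs => hs.2.1
  set S := hSfin.toFinset with hS
  set T := hTfin.toFinset with hT
  have hmemS : ∀ s, s ∈ S ↔ s ∈ N₁ ∧ (∀ i, ∑ j, u i j * s j = ∑ j, u i j * b j) ∧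
      (s = b ∨ τ.lt s b) := fun s => by rw [hS, Set.Finite.mem_toFinset]; rfl
  have hmemT : ∀ s, s ∈ T ↔ s ∈ N₁ ∧ (∀ i, ∑ j, u i j * s j = ∑ j, u i j * b j) ∧
      (s = φ b ∨ τ.lt s (φ b)) := fun s => by rw [hT, Set.Finite.mem_toFinset]; rfl
  have hTS : T.card < S.card := by
    refine Finset.card_lt_card ((Finset.ssubset_iff_of_subset fun t ht => ?_).2 ⟨b, ?_, ?_⟩)
    · obtain ⟨h1, h2, h3⟩ := (hmemT t).1 ht
      refine (hmemS t).2 ⟨h1, h2, Or.inr ?_⟩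
      rcases h3 with rfl | h3
      · exact hlt
      · exact τ.trans _ _ _ h3 hlt
    · exact (hmemS b).2 ⟨hb, fun _ => rfl, Or.inl rfl⟩
    · intro hbT
      rcases ((hmemT b).1 hbT).2.2 with h | h
      · rw [← h] at hlt
        exact τ.irrefl _ hlt
      · exact τ.irrefl _ (τ.trans _ _ _ h hlt)
  -- Combinations of the `f₂ (φ s)`, `s ∈ S`, are determined by their coefficients on `T`.
  let G : (S → k) →ₗ[k] MvPolynomial (Fin n) k :=
    Fintype.linearCombination k fun s : S => f₂ (φ s)
  let L : (S → k) →ₗ[k] (T → k) := LinearMap.pi fun t : T => (lcoeff k (t : Fin n →₀ ℕ)).comp G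
  have hG : ∀ c : S → k, G c = ∑ s : S, c s • f₂ (φ s) := fun c =>
    Fintype.linearCombination_apply k _ c
  have hL : Function.Injective L := by
    rw [← LinearMap.ker_eq_bot, LinearMap.ker_eq_bot']
    intro c hLc
    by_contra hc
    obtain ⟨s₀, hs₀⟩ := Function.ne_iff.1 hc
    have hφN : ∀ s : S, φ s ∈ N₂ := fun s => hbij.mapsTo ((hmemS s).1 s.2).1
    have hφdeg : ∀ s : S, ∀ i, ∑ j, u i j * φ s j = ∑ j, u i j * b j := fun s i =>
      (hdeg s ((hmemS s).1 s.2).1 i).trans (((hmemS s).1 s.2).2.1 i)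
    have hφv : ∀ s : S, wdeg v (φ s) = wdeg v b := fun s => hdeg_F _ _ (hφdeg s) v hvF
    have hgI : G c ∈ I := by
      rw [hG]
      refine I.sum_mem fun s _ => ?_
      rw [smul_eq_C_mul]
      exact I.mul_mem_left _ (hB₂.mem _ (hφN s))
    have hgs : ∀ t ∈ (G c).support, ∃ s : S, t ∈ (f₂ (φ s)).support := by
      intro t ht
      by_contra! hall
      apply mem_support_iff.1 ht
      rw [hG, coeff_sum]
      refine Finset.sum_eq_zero fun s _ => ?_
      rw [coeff_smul, notMem_support_iff.1 (hall s), smul_zero]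
    have hgv : ∀ t ∈ (G c).support, wdeg v t ≤ wdeg v b := fun t ht => by
      obtain ⟨s, hs⟩ := hgs t ht
      exact (hB₂.le v (hFD₂ hvF) _ (hφN s) t hs).trans_eq (hφv s)
    have hs₀g : φ s₀ ∈ (G c).support := by
      rw [mem_support_iff, hG, coeff_sum, Finset.sum_eq_single s₀]
      · rw [coeff_smul, hB₂.coeff_self _ (hφN s₀), smul_eq_mul, mul_one]
        exact hs₀
      · intro s _ hss₀
        rw [coeff_smul, hB₂.coeff_eq_zero (hφN s) (hφN s₀), smul_zero]
        intro h
        exact hss₀ (Subtype.ext (hbij.injOn ((hmemS s).1 s.2).1 ((hmemS s₀).1 s₀.2).1 h.symm))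
      · simp
    obtain ⟨t, ht, htmax⟩ := Finset.exists_max_image
      ((G c).support.filter fun t => wdeg v t = wdeg v b) (wdeg w₁)
      ⟨φ s₀, Finset.mem_filter.2 ⟨hs₀g, hφv s₀⟩⟩
    obtain ⟨htg, htv⟩ := Finset.mem_filter.1 ht
    have htN : t ∈ N₁ := hB₁.leading_mem (hD₁ hvF.1) (interior_mono hD₁ hw₁) hgI htg
      (fun β hβ => htv ▸ hgv β hβ)
      (fun β hβ hβv => htmax β (Finset.mem_filter.2 ⟨hβ, hβv.trans htv⟩))
    obtain ⟨s, hs⟩ := hgs t htg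
    have hzero := eq_zero_of_intrinsicInterior hv
      (d := fun i => ((φ s) i : ℝ) - (t i : ℝ))
      (fun y hy => by
        rw [← wdeg_sub_wdeg, sub_nonneg]
        exact hB₂.le y (hFD₂ hy) _ (hφN s) t hs)
      (by rw [← wdeg_sub_wdeg, hφv s, htv, sub_self])
    obtain ⟨a, ha⟩ := exists_smul_of_orthogonal hn hfacet hd0 horth hzero
    have ha' : ∀ j, ((φ s) j : ℝ) - (t j : ℝ) = a * d j := fun j => congrFun ha j
    have hts : t = φ s ∨ τ.lt t (φ s) := by
      by_cases h : t = φ s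
      · exact Or.inl h
      · refine Or.inr (τ.lt_of_line hpq ?_ ha')
        have h1 := sub_pos.2 (hB₂.lt (interior_mono hD₂ hw₂) (hφN s) hs h)
        rw [wdeg_sub_wdeg] at h1
        simp only [ha', mul_left_comm _ a] at h1
        rw [← Finset.mul_sum] at h1
        exact (pos_iff_pos_of_mul_pos h1).2 hw₂d
    have hsb : φ s = φ b ∨ τ.lt (φ s) (φ b) := by
      obtain ⟨h1, h2, h3⟩ := (hmemS s).1 s.2
      rcases h3 with h3 | h3
      · exact Or.inl (by rw [h3])
      · exact Or.inr ((hmono s h1 b hb h2).1 h3)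
    have htT : t ∈ T := by
      refine (hmemT t).2 ⟨htN, fun i => ?_, ?_⟩
      · rw [← hφdeg s i, hline_deg _ _ a ha' i]
      · rcases hts with h | h
        · rwa [← h] at hsb
        · rcases hsb with h' | h'
          · exact Or.inr (h' ▸ h)
          · exact Or.inr (τ.trans _ _ _ h h')
    exact mem_support_iff.1 htg (congrFun hLc ⟨t, htT⟩)
  have hcard := LinearMap.finrank_le_finrank_of_injective hL
  rw [Module.finrank_fintype_fun_eq_card, Module.finrank_fintype_fun_eq_card,
    Fintype.card_coe, Fintype.card_coe] at hcard
  omega
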